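/- arXiv:1508.05688 — 2 statements merged into one kernel-verified Lean document; each statement's English description precedes it below -/
import Mathlib

section
/- For every m ≥ 1, every k ≥ 1, and every function i : {1,…,2k} → {1,…,m+1}, the even moments of the unit sphere are given by the Wick-type formula ∫_{S^m} x_{i(1)} x_{i(2)} ⋯ x_{i(2k)} dσ(x) = (Vol(S^m)·(m−1)!!/(m+2k−1)!!) · Σ_M Π_{{p,q} ∈ M} δ_{i(p) i(q)}, where the sum runs over all partitions M of the index set {1,…,2k} into k unordered pairs, and δ_{ab} is the Kronecker delta. (Equivalently, the moment tensor equals (Vol(S^m)(m−1)!!/(k!(m+2k−1)!!))·δ^{⊙k}, where δ^{⊙k} is the k-fold unnormalized symmetric power of the Kronecker delta, which equals k! times the sum over pairings.) -/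
open MeasureTheory

/-!
If `μ` is invariant under rotations, then differentiating `∫ f (exp (t A) x) ∂μ` at `t = 0` gives
`∫ Df(x) (A x) ∂μ = 0` for every skew-adjoint `A`. Let `b` run through an orthonormal basis, take
for `A` the generator `x ↦ ⟪b, x⟫ a - ⟪a, x⟫ b` of the rotations in the plane of `a` and `b`, and
apply this to `⟪b, x⟫ f x`; the sum over `b` is the integration by parts formula
`(dim E - 1) ∫ ⟪a, x⟫ f = ∫ (‖x‖² Df(x) a - ⟪a, x⟫ Df(x) x)`.
For `f` a product of linear forms on the unit sphere, Euler's identity turns the last term into a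
multiple of the left side. The resulting recursion on moments is the expansion of the Hafnian
according to the block containing a given index.
-/

section Pairings

open Finset

variable {α R : Type*} [DecidableEq α] [CommSemiring R] {s q : Finset α}
  {M : Finset (Finset α)} {p : α}

/-- The perfect matchings of `s`, i.e. its partitions into two-element blocks, over which Wick sums
run. A matching is encoded as the finset of its blocks. -/
def pairings (s : Finset α) : Finset (Finset (Finset α)) :=
  {M ∈ s.powerset.powerset | (∀ p ∈ M, #p = 2) ∧ (∀ p ∈ M, ∀ q ∈ M, p ≠ q → Disjoint p q) ∧
    M.sup id = s}

theorem mem_pairings :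
    M ∈ pairings s ↔ (∀ p ∈ M, #p = 2) ∧ (∀ p ∈ M, ∀ q ∈ M, p ≠ q → Disjoint p q) ∧
      M.sup id = s := by
  rw [pairings, mem_filter, and_iff_right_iff_imp]
  rintro ⟨-, -, rfl⟩
  exact mem_powerset.2 fun p hp ↦ mem_powerset.2 (le_sup (f := id) hp)

theorem pairings_univ [Fintype α] :
    pairings (univ : Finset α) = univ.filter fun M : Finset (Finset α) ↦
      (∀ p ∈ M, #p = 2) ∧ (∀ p ∈ M, ∀ q ∈ M, p ≠ q → Disjoint p q) ∧ M.sup id = univ := by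
  ext M
  rw [mem_pairings, mem_filter_univ]

theorem subset_of_mem_pairings (hM : M ∈ pairings s) (hq : q ∈ M) : q ⊆ s :=
  (mem_pairings.1 hM).2.2 ▸ le_sup (f := id) hq

theorem pairings_empty : pairings (∅ : Finset α) = {∅} := by
  ext M
  rw [mem_singleton]
  refine ⟨fun hM ↦ eq_empty_of_forall_notMem fun q hq ↦ ?_, ?_⟩
  · have hcard := (mem_pairings.1 hM).1 q hq
    simp [subset_empty.1 (subset_of_mem_pairings hM hq)] at hcard
  · rintro rfl
    simp [mem_pairings]

theorem insert_mem_pairings_union (hq : #q = 2) (hqs : Disjoint q s) (hM : M ∈ pairings s) :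
    insert q M ∈ pairings (q ∪ s) := by
  have hdisj : ∀ r ∈ M, Disjoint q r := fun r hr ↦
    disjoint_of_subset_right (subset_of_mem_pairings hM hr) hqs
  obtain ⟨hcard, hpair, rfl⟩ := mem_pairings.1 hM
  simp only [mem_pairings, forall_mem_insert, sup_insert, id, sup_eq_union, and_true]
  exact ⟨⟨hq, hcard⟩, ⟨fun h ↦ (h rfl).elim, fun r hr _ ↦ hdisj r hr⟩,
    fun r hr ↦ ⟨fun _ ↦ (hdisj r hr).symm, hpair r hr⟩⟩

theorem erase_mem_pairings_sdiff (hM : M ∈ pairings s) (hq : q ∈ M) :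
    M.erase q ∈ pairings (s \ q) := by
  obtain ⟨hcard, hpair, rfl⟩ := mem_pairings.1 hM
  refine mem_pairings.2 ⟨fun r hr ↦ hcard r (mem_of_mem_erase hr), fun r hr r' hr' ↦
    hpair r (mem_of_mem_erase hr) r' (mem_of_mem_erase hr'), ?_⟩
  have hdisj : Disjoint q ((M.erase q).sup id) :=
    Finset.disjoint_sup_right.2 fun r hr ↦
      hpair q hq r (mem_of_mem_erase hr) (ne_of_mem_erase hr).symm
  nth_rw 2 [← insert_erase hq]
  rw [sup_insert, id, sup_eq_union, union_sdiff_cancel_left hdisj]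

theorem existsUnique_pair_mem_of_mem_pairings (hM : M ∈ pairings s) (hp : p ∈ s) :
    ∃! l, l ∈ s.erase p ∧ {p, l} ∈ M := by
  obtain ⟨hcard, hpair, rfl⟩ := mem_pairings.1 hM
  obtain ⟨q, hq, hpq : p ∈ q⟩ := mem_sup.1 hp
  obtain ⟨l, hlp, rfl⟩ : ∃ l, l ≠ p ∧ q = {p, l} := by
    obtain ⟨l, hl⟩ := card_eq_one.1 (by rw [card_erase_of_mem hpq, hcard q hq] : #(q.erase p) = 1)
    exact ⟨l, ne_of_mem_erase (hl ▸ mem_singleton_self l), by rw [← insert_erase hpq, hl]⟩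
  have hl : l ∈ M.sup id := subset_of_mem_pairings hM hq (by simp)
  refine ⟨l, ⟨mem_erase.2 ⟨hlp, hl⟩, hq⟩, fun l' ⟨hl', hq'⟩ ↦ ?_⟩
  have hblock : ({p, l'} : Finset α) = {p, l} := by
    by_contra hne
    exact disjoint_left.1 (hpair _ hq' _ hq hne) (mem_insert_self p _) (mem_insert_self p _)
  have hmem : l' ∈ ({p, l} : Finset α) := hblock ▸ (by simp : l' ∈ {p, l'})
  simpa [ne_of_mem_erase hl'] using hmem

/-- The Hafnian of a symmetric array of weights indexed by `s`, expressing moments as sums over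
matchings. The array is encoded as a function `w` of the unordered pairs, viewed as two-element
finsets; its diagonal is absent. -/
def hafnian (w : Finset α → R) (s : Finset α) : R :=
  ∑ M ∈ pairings s, ∏ q ∈ M, w q

theorem hafnian_empty (w : Finset α → R) : hafnian w ∅ = 1 := by
  simp [hafnian, pairings_empty]

theorem sum_pairings_filter_mem (w : Finset α → R) (hq : #q = 2) (hqs : q ⊆ s) :
    ∑ M ∈ pairings s with q ∈ M, ∏ r ∈ M, w r = w q * hafnian w (s \ q) := by
  have hnotMem : ∀ N ∈ pairings (s \ q), q ∉ N := by
    intro N hN hqN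
    have hempty : q = ∅ :=
      disjoint_self_iff_empty q |>.1 <|
        disjoint_of_subset_right (subset_of_mem_pairings hN hqN) disjoint_sdiff
    simp [hempty] at hq
  rw [hafnian, mul_sum]
  refine sum_bij' (fun M _ ↦ M.erase q) (fun N _ ↦ insert q N) ?_ ?_ ?_ ?_ ?_
  · exact fun M hM ↦ erase_mem_pairings_sdiff (mem_filter.1 hM).1 (mem_filter.1 hM).2
  · intro N hN
    refine mem_filter.2 ⟨?_, mem_insert_self q N⟩
    simpa [union_sdiff_of_subset hqs] using insert_mem_pairings_union hq disjoint_sdiff hN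
  · exact fun M hM ↦ insert_erase (mem_filter.1 hM).2
  · exact fun N hN ↦ erase_insert (hnotMem N hN)
  · exact fun M hM ↦ (mul_prod_erase M w (mem_filter.1 hM).2).symm

theorem hafnian_eq_sum_erase (w : Finset α → R) (hp : p ∈ s) :
    hafnian w s = ∑ l ∈ s.erase p, w {p, l} * hafnian w ((s.erase p).erase l) := by
  have hpartner : ∀ M ∈ pairings s, #{l ∈ s.erase p | {p, l} ∈ M} = 1 := fun M hM ↦ by
    simpa only [card_eq_one, singleton_iff_unique_mem, mem_filter] using
      existsUnique_pair_mem_of_mem_pairings hM hp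
  calc hafnian w s
      = ∑ M ∈ pairings s, ∑ l ∈ s.erase p with {p, l} ∈ M, ∏ q ∈ M, w q :=
        sum_congr rfl fun M hM ↦ by rw [sum_const, hpartner M hM, one_smul]
    _ = ∑ l ∈ s.erase p, ∑ M ∈ pairings s with {p, l} ∈ M, ∏ q ∈ M, w q :=
        sum_comm' fun M l ↦ by simp only [mem_filter]; tauto
    _ = ∑ l ∈ s.erase p, w {p, l} * hafnian w ((s.erase p).erase l) := by
        refine sum_congr rfl fun l hl ↦ ?_
        obtain ⟨hlp, hls⟩ := mem_erase.1 hl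
        rw [sum_pairings_filter_mem w (card_pair hlp.symm)
          (insert_subset hp (singleton_subset_iff.2 hls)), sdiff_insert, sdiff_singleton_eq_erase,
          erase_right_comm]

theorem forall_mem_pair_apply_eq_iff {β : Type*} {f : α → β} {p q : α} :
    (∀ a ∈ ({p, q} : Finset α), ∀ b ∈ ({p, q} : Finset α), f a = f b) ↔ f p = f q := by
  simp only [forall_mem_insert, mem_singleton, forall_eq, true_and, and_true]
  exact ⟨And.left, fun h ↦ ⟨h, h.symm⟩⟩

end Pairings

open scoped Nat in
theorem doubleFactorial_add_two_mul_sub_one (m k : ℕ) :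
    (m + 2 * k - 1)‼ = (m - 1)‼ * ∏ j ∈ Finset.range k, (m + 1 + 2 * j) := by
  induction k with
  | zero => simp
  | succ k ih =>
    rw [Finset.prod_range_succ, ← mul_assoc, ← ih,
      show m + 2 * (k + 1) - 1 = m + 2 * k + 1 by omega, Nat.doubleFactorial_add_one]
    ring

section Isserlis

open Metric Module InnerProductSpace
open scoped RealInnerProductSpace

section Finiteness

theorem hausdorffMeasure_image_closedBall_lt_top {F G : Type*} [NormedAddCommGroup F]
    [NormedSpace ℝ F] [FiniteDimensional ℝ F] [MeasurableSpace F] [BorelSpace F]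
    [NormedAddCommGroup G] [NormedSpace ℝ G] [MeasurableSpace G] [BorelSpace G] {f : F → G}
    (hf : ContDiff ℝ 1 f) (r : ℝ) :
    μH[finrank ℝ F] (f '' closedBall 0 r) < ⊤ := by
  obtain ⟨C, hC⟩ := hf.contDiffOn.exists_lipschitzOnWith one_ne_zero (convex_closedBall (0 : F) r)
    (isCompact_closedBall 0 r)
  exact (hC.hausdorffMeasure_image_le (Nat.cast_nonneg _)).trans_lt <|
    ENNReal.mul_lt_top (ENNReal.rpow_lt_top_of_nonneg (Nat.cast_nonneg _) ENNReal.coe_ne_top)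
      measure_closedBall_lt_top

variable {E : Type*} [NormedAddCommGroup E] [InnerProductSpace ℝ E]

theorem sphere_inter_inner_nonpos_subset_image_stereoInvFun {v : E} (hv : ‖v‖ = 1) :
    sphere (0 : E) 1 ∩ {x | ⟪v, x⟫ ≤ 0} ⊆
      (fun w : (ℝ ∙ v)ᗮ ↦ stereoInvFunAux v w) '' closedBall 0 2 := by
  rintro x ⟨hx, hvx : ⟪v, x⟫ ≤ 0⟩
  have hxv : x ≠ v := by
    rintro rfl
    rw [real_inner_self_eq_norm_sq, hv] at hvx
    norm_num at hvx
  refine ⟨stereoToFun v x, ?_, congrArg Subtype.val (stereo_left_inv hv (x := ⟨x, hx⟩) hxv)⟩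
  rw [mem_closedBall_zero_iff, stereoToFun_apply, norm_smul, innerSL_apply_apply]
  have hscale : ‖2 / (1 - ⟪v, x⟫)‖ ≤ 2 := by
    rw [norm_div, Real.norm_two, Real.norm_of_nonneg (by linarith)]
    exact div_le_self zero_le_two (by linarith)
  have hproj : ‖(ℝ ∙ v)ᗮ.orthogonalProjectionOnto x‖ ≤ 1 :=
    ((ℝ ∙ v)ᗮ.norm_orthogonalProjectionOnto_apply_le x).trans_eq (mem_sphere_zero_iff_norm.1 hx)
  nlinarith [norm_nonneg (2 / (1 - ⟪v, x⟫))]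

variable [MeasurableSpace E] [BorelSpace E]

theorem hausdorffMeasure_sphere_lt_top {m : ℕ} (hE : finrank ℝ E = m + 1) :
    μH[m] (sphere (0 : E) 1) < ⊤ := by
  have : FiniteDimensional ℝ E := .of_finrank_eq_succ hE
  have : Nontrivial E := nontrivial_of_finrank_eq_succ hE
  have : Fact (finrank ℝ E = m + 1) := ⟨hE⟩
  have hemisphere_lt_top : ∀ v : E, ‖v‖ = 1 → μH[m] (sphere (0 : E) 1 ∩ {x | ⟪v, x⟫ ≤ 0}) < ⊤ := by
    intro v hv
    have hcompl : finrank ℝ (ℝ ∙ v)ᗮ = m :=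
      Submodule.finrank_orthogonal_span_singleton (norm_ne_zero_iff.1 (hv ▸ one_ne_zero))
    have himage := hausdorffMeasure_image_closedBall_lt_top (F := (ℝ ∙ v)ᗮ)
      (contDiff_stereoInvFunAux (v := v).comp (ℝ ∙ v)ᗮ.subtypeL.contDiff) 2
    rw [hcompl] at himage
    exact (measure_mono (sphere_inter_inner_nonpos_subset_image_stereoInvFun hv)).trans_lt himage
  obtain ⟨v, hv⟩ := NormedSpace.sphere_nonempty (x := (0 : E)) (r := 1) |>.2 zero_le_one
  rw [mem_sphere_zero_iff_norm] at hv
  refine (measure_mono fun x hx ↦ ?_).trans_lt <| measure_union_lt_top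
    (hemisphere_lt_top v hv) (hemisphere_lt_top (-v) (by rwa [norm_neg]))
  rcases le_total ⟪v, x⟫ 0 with hvx | hvx
  · exact .inl ⟨hx, hvx⟩
  · exact .inr ⟨hx, by simpa using hvx⟩

end Finiteness

section Rotations

variable {E : Type*} [NormedAddCommGroup E] [InnerProductSpace ℝ E]

/-- The infinitesimal generator of the rotations in the plane spanned by `a` and `b`, which fix its
orthogonal complement; it rotates `b` towards `a`. The vector field it defines is tangent to
spheres. -/
noncomputable def rotationGenerator (a b : E) : E →L[ℝ] E :=
  rankOne ℝ a b - rankOne ℝ b a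

theorem rotationGenerator_apply (a b x : E) :
    rotationGenerator a b x = ⟪b, x⟫ • a - ⟪a, x⟫ • b := rfl

section OrthonormalBasis

variable {κ : Type*} [Fintype κ] (b : OrthonormalBasis κ ℝ E) (a x : E)

theorem sum_inner_rotationGenerator_apply :
    ∑ j, ⟪b j, rotationGenerator a (b j) x⟫ = (1 - Fintype.card κ) * ⟪a, x⟫ := by
  have hterm : ∀ j, ⟪b j, rotationGenerator a (b j) x⟫ = ⟪a, b j⟫ * ⟪b j, x⟫ - ⟪a, x⟫ := fun j ↦ by
    rw [rotationGenerator_apply, inner_sub_right, real_inner_smul_right, real_inner_smul_right,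
      real_inner_self_eq_norm_sq, b.norm_eq_one, real_inner_comm a]
    ring
  simp only [hterm, Finset.sum_sub_distrib, b.sum_inner_mul_inner, Finset.sum_const,
    Finset.card_univ, nsmul_eq_mul]
  ring

theorem sum_inner_smul_rotationGenerator_apply :
    ∑ j, ⟪b j, x⟫ • rotationGenerator a (b j) x = ‖x‖ ^ 2 • a - ⟪a, x⟫ • x := by
  simp only [rotationGenerator_apply, smul_sub, smul_smul, Finset.sum_sub_distrib,
    mul_comm ⟪_, x⟫ ⟪a, x⟫, ← sq, ← Finset.sum_smul, b.sum_sq_inner_right]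
  simp only [mul_smul, ← Finset.smul_sum, b.sum_repr']

end OrthonormalBasis

variable [CompleteSpace E]

theorem rotationGenerator_mem_skewAdjoint (a b : E) :
    rotationGenerator a b ∈ skewAdjoint (E →L[ℝ] E) := by
  simp [rotationGenerator, skewAdjoint.mem_iff, ContinuousLinearMap.star_eq_adjoint]

/-- The one-parameter group `t ↦ exp (t A)` of rotations generated by a skew-adjoint operator `A`,
bundled as linear isometries so that invariance of a measure applies to it. -/
noncomputable def rotationFlow (A : skewAdjoint (E →L[ℝ] E)) (t : ℝ) : E ≃ₗᵢ[ℝ] E :=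
  letI : NormedAlgebra ℚ (E →L[ℝ] E) := .restrictScalars ℚ ℝ _
  Unitary.linearIsometryEquiv ⟨NormedSpace.exp (t • (A : E →L[ℝ] E)),
    NormedSpace.exp_mem_unitary_of_mem_skewAdjoint (skewAdjoint.smul_mem t A.2)⟩

theorem rotationFlow_apply (A : skewAdjoint (E →L[ℝ] E)) (t : ℝ) (x : E) :
    rotationFlow A t x = NormedSpace.exp (t • (A : E →L[ℝ] E)) x := rfl

theorem rotationFlow_zero_apply (A : skewAdjoint (E →L[ℝ] E)) (x : E) :
    rotationFlow A 0 x = x := by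
  simp [rotationFlow_apply]

theorem hasDerivAt_rotationFlow (A : skewAdjoint (E →L[ℝ] E)) (x : E) (t : ℝ) :
    HasDerivAt (fun t ↦ rotationFlow A t x) (rotationFlow A t ((A : E →L[ℝ] E) x)) t := by
  simpa [rotationFlow_apply] using
    (hasDerivAt_exp_smul_const (A : E →L[ℝ] E) t).clm_apply (hasDerivAt_const t x)

end Rotations

section InvariantMeasures

variable {E : Type*} [NormedAddCommGroup E] [InnerProductSpace ℝ E] [FiniteDimensional ℝ E]
  [MeasurableSpace E] [BorelSpace E] {μ : Measure E} [IsFiniteMeasure μ] {r : ℝ}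

theorem integrable_of_continuous_of_ae_norm_le {F : Type*} [NormedAddCommGroup F]
    (hr : ∀ᵐ x ∂μ, ‖x‖ ≤ r) {f : E → F} (hf : Continuous f) : Integrable f μ := by
  obtain ⟨C, hC⟩ := (isCompact_closedBall (0 : E) r).exists_bound_of_continuousOn hf.continuousOn
  exact .of_bound hf.aestronglyMeasurable C <|
    hr.mono fun x hx ↦ hC x (mem_closedBall_zero_iff.2 hx)

theorem integral_fderiv_skewAdjoint_apply {F : Type*} [NormedAddCommGroup F] [NormedSpace ℝ F]
    (hr : ∀ᵐ x ∂μ, ‖x‖ ≤ r) (hμ : ∀ e : E ≃ₗᵢ[ℝ] E, MeasurePreserving e μ μ)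
    (A : skewAdjoint (E →L[ℝ] E)) {f : E → F} (hf : ContDiff ℝ 1 f) :
    ∫ x, fderiv ℝ f x ((A : E →L[ℝ] E) x) ∂μ = 0 := by
  let f' := fun t x ↦ fderiv ℝ f (rotationFlow A t x) (rotationFlow A t ((A : E →L[ℝ] E) x))
  have hderiv : ∀ x t, HasDerivAt (fun t ↦ f (rotationFlow A t x)) (f' t x) t := fun x t ↦
    (hf.differentiable one_ne_zero _).hasFDerivAt.comp_hasDerivAt t (hasDerivAt_rotationFlow A x t)
  have hcont : Continuous (fderiv ℝ f) := hf.continuous_fderiv one_ne_zero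
  obtain ⟨C, hC⟩ := (isCompact_closedBall (0 : E) r).exists_bound_of_continuousOn hcont.continuousOn
  have hbound : ∀ᵐ x ∂μ, ∀ t ∈ Set.univ, ‖f' t x‖ ≤ C * ‖(A : E →L[ℝ] E) x‖ := by
    filter_upwards [hr] with x hx t _
    have hmem : rotationFlow A t x ∈ closedBall (0 : E) r := by simpa using hx
    simpa using (fderiv ℝ f _).le_of_opNorm_le (hC _ hmem) (rotationFlow A t ((A : E →L[ℝ] E) x))
  have hderiv_integral := (hasDerivAt_integral_of_dominated_loc_of_deriv_le Filter.univ_mem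
    (.of_forall fun t ↦ (hf.continuous.comp (rotationFlow A t).continuous).aestronglyMeasurable)
    (integrable_of_continuous_of_ae_norm_le hr
      (hf.continuous.comp (rotationFlow A 0).continuous))
    (by fun_prop : Continuous (f' 0)).aestronglyMeasurable hbound
    (integrable_of_continuous_of_ae_norm_le hr (by fun_prop))
    (.of_forall fun x t _ ↦ hderiv x t)).2
  have hconst : ∀ t, ∫ x, f (rotationFlow A t x) ∂μ = ∫ x, f x ∂μ := fun t ↦
    (hμ _).integral_comp (rotationFlow A t).toHomeomorph.measurableEmbedding f
  simp only [f', rotationFlow_zero_apply, Function.comp_apply, hconst] at hderiv_integral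
  exact hderiv_integral.unique (hasDerivAt_const (0 : ℝ) _)

theorem finrank_sub_one_mul_integral_inner_mul (hr : ∀ᵐ x ∂μ, ‖x‖ ≤ r)
    (hμ : ∀ e : E ≃ₗᵢ[ℝ] E, MeasurePreserving e μ μ) {f : E → ℝ} (hf : ContDiff ℝ 1 f) (a : E) :
    (finrank ℝ E - 1 : ℝ) * ∫ x, ⟪a, x⟫ * f x ∂μ =
      ∫ x, (‖x‖ ^ 2 * fderiv ℝ f x a - ⟪a, x⟫ * fderiv ℝ f x x) ∂μ := by
  let b := stdOrthonormalBasis ℝ E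
  let g := fun j x ↦ ⟪b j, x⟫ * f x
  have hg : ∀ j, ContDiff ℝ 1 (g j) := fun j ↦ (contDiff_const.inner ℝ contDiff_id).mul hf
  have hg' : ∀ j x y, fderiv ℝ (g j) x y = ⟪b j, y⟫ * f x + fderiv ℝ f x (⟪b j, x⟫ • y) := by
    intro j x y
    have hderiv := ((innerSL ℝ (b j)).hasFDerivAt (x := x)).mul
      (hf.differentiable one_ne_zero x).hasFDerivAt
    rw [HasFDerivAt.fderiv (f := g j) hderiv, map_smul, smul_eq_mul, add_comm, mul_comm ⟪b j, y⟫]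
    rfl
  have hsum : ∀ x, ∑ j, fderiv ℝ (g j) x (rotationGenerator a (b j) x) =
      (‖x‖ ^ 2 * fderiv ℝ f x a - ⟪a, x⟫ * fderiv ℝ f x x) -
        (finrank ℝ E - 1) * (⟪a, x⟫ * f x) := by
    intro x
    rw [Finset.sum_congr rfl fun j _ ↦ hg' j x _, Finset.sum_add_distrib, ← Finset.sum_mul,
      ← map_sum, sum_inner_rotationGenerator_apply, sum_inner_smul_rotationGenerator_apply,
      Fintype.card_fin, map_sub, map_smul, map_smul, smul_eq_mul, smul_eq_mul]
    ring
  have hzero : ∫ x, ∑ j, fderiv ℝ (g j) x (rotationGenerator a (b j) x) ∂μ = 0 := by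
    rw [integral_finsetSum _ fun j _ ↦ integrable_of_continuous_of_ae_norm_le hr
      (((hg j).continuous_fderiv one_ne_zero).clm_apply (rotationGenerator a (b j)).continuous)]
    exact Finset.sum_eq_zero fun j _ ↦ integral_fderiv_skewAdjoint_apply hr hμ
      ⟨_, rotationGenerator_mem_skewAdjoint a (b j)⟩ (hg j)
  simp only [hsum] at hzero
  rw [integral_sub (integrable_of_continuous_of_ae_norm_le hr (by fun_prop))
    (integrable_of_continuous_of_ae_norm_le hr (by fun_prop)), integral_const_mul,
    sub_eq_zero] at hzero
  exact hzero.symm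

variable {ι : Type*} [DecidableEq ι]

theorem integral_inner_mul_prod_inner (hsphere : ∀ᵐ x ∂μ, ‖x‖ = 1)
    (hμ : ∀ e : E ≃ₗᵢ[ℝ] E, MeasurePreserving e μ μ) (v : ι → E) (a : E) (s : Finset ι) :
    (finrank ℝ E - 1 + s.card : ℝ) * ∫ x, ⟪a, x⟫ * ∏ j ∈ s, ⟪v j, x⟫ ∂μ =
      ∑ l ∈ s, ⟪a, v l⟫ * ∫ x, ∏ j ∈ s.erase l, ⟪v j, x⟫ ∂μ := by
  have hball : ∀ᵐ x ∂μ, ‖x‖ ≤ 1 := hsphere.mono fun _ ↦ le_of_eq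
  let f := fun x ↦ ∏ j ∈ s, ⟪v j, x⟫
  have hf : ContDiff ℝ 1 f := contDiff_prod fun j _ ↦ contDiff_const.inner ℝ contDiff_id
  have hf' : ∀ x y, fderiv ℝ f x y = ∑ l ∈ s, (∏ j ∈ s.erase l, ⟪v j, x⟫) * ⟪v l, y⟫ := by
    intro x y
    have hderiv := HasFDerivAt.finsetProd (u := s) fun j _ ↦
      (innerSL ℝ (v j)).hasFDerivAt (x := x)
    rw [HasFDerivAt.fderiv (f := f) hderiv]
    simp
  have heuler : ∀ x, fderiv ℝ f x x = s.card * f x := fun x ↦ by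
    rw [hf', Finset.sum_congr rfl fun l hl ↦ Finset.prod_erase_mul s (⟪v ·, x⟫) hl,
      Finset.sum_const, nsmul_eq_mul]
  have hparts := finrank_sub_one_mul_integral_inner_mul hball hμ hf a
  have hintegrand : ∀ᵐ x ∂μ, ‖x‖ ^ 2 * fderiv ℝ f x a - ⟪a, x⟫ * fderiv ℝ f x x =
      (∑ l ∈ s, ⟪a, v l⟫ * ∏ j ∈ s.erase l, ⟪v j, x⟫) - s.card * (⟪a, x⟫ * f x) := by
    filter_upwards [hsphere] with x hx
    rw [hx, one_pow, one_mul, heuler, hf']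
    simp only [real_inner_comm a, mul_comm ⟪a, _⟫]
    ring
  rw [integral_congr_ae hintegrand, integral_sub
    (integrable_of_continuous_of_ae_norm_le hball (by fun_prop))
    (integrable_of_continuous_of_ae_norm_le hball (by fun_prop)), integral_finsetSum _ fun l _ ↦
      integrable_of_continuous_of_ae_norm_le hball (by fun_prop)] at hparts
  simp only [integral_const_mul] at hparts
  linear_combination hparts

theorem prod_mul_integral_prod_inner_eq_hafnian (hsphere : ∀ᵐ x ∂μ, ‖x‖ = 1)
    (hμ : ∀ e : E ≃ₗᵢ[ℝ] E, MeasurePreserving e μ μ) {v : ι → E} {w : Finset ι → ℝ}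
    (hw : ∀ p q, p ≠ q → w {p, q} = ⟪v p, v q⟫) {k : ℕ} {s : Finset ι} (hs : s.card = 2 * k) :
    (∏ j ∈ Finset.range k, (finrank ℝ E + 2 * j : ℝ)) * ∫ x, ∏ j ∈ s, ⟪v j, x⟫ ∂μ =
      μ.real Set.univ * hafnian w s := by
  induction k generalizing s with
  | zero =>
    obtain rfl : s = ∅ := by simpa using hs
    simp [hafnian_empty]
  | succ k ih =>
    obtain ⟨p, hp⟩ : s.Nonempty := Finset.card_pos.1 (by omega)
    have hcard : (s.erase p).card = 2 * k + 1 := by rw [Finset.card_erase_of_mem hp]; omega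
    have hrec := integral_inner_mul_prod_inner hsphere hμ v (v p) (s.erase p)
    have hprod : ∀ x, ⟪v p, x⟫ * ∏ j ∈ s.erase p, ⟪v j, x⟫ = ∏ j ∈ s, ⟪v j, x⟫ := fun x ↦
      Finset.mul_prod_erase s (⟪v ·, x⟫) hp
    simp only [hprod, hcard] at hrec
    have hfactor : (finrank ℝ E - 1 + (2 * k + 1 : ℕ) : ℝ) = finrank ℝ E + 2 * k := by
      push_cast; ring
    rw [Finset.prod_range_succ, mul_assoc, ← hfactor, hrec, hafnian_eq_sum_erase w hp,
      Finset.mul_sum, Finset.mul_sum]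
    refine Finset.sum_congr rfl fun l hl ↦ ?_
    have hcard' : ((s.erase p).erase l).card = 2 * k := by
      rw [Finset.card_erase_of_mem hl, hcard, Nat.add_sub_cancel]
    rw [mul_left_comm, ih hcard', hw p l (Finset.ne_of_mem_erase hl).symm, mul_left_comm]

end InvariantMeasures

section Sphere

variable {E : Type*} [NormedAddCommGroup E] [InnerProductSpace ℝ E] [MeasurableSpace E]
  [BorelSpace E]

theorem measurePreserving_hausdorffMeasure_restrict_sphere (d r : ℝ) (e : E ≃ₗᵢ[ℝ] E) :
    MeasurePreserving e (μH[d].restrict (sphere 0 r)) (μH[d].restrict (sphere 0 r)) := by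
  have hrestrict := (e.toIsometryEquiv.measurePreserving_hausdorffMeasure d).restrict_preimage
    (isClosed_sphere (x := (0 : E)) (ε := r)).measurableSet
  rwa [e.toIsometryEquiv.preimage_sphere, LinearIsometryEquiv.coe_symm_toIsometryEquiv,
    map_zero] at hrestrict

theorem prod_mul_integral_sphere_prod_inner_eq_hafnian {m k : ℕ} (hE : finrank ℝ E = m + 1)
    {ι : Type*} [DecidableEq ι] {v : ι → E} {w : Finset ι → ℝ}
    (hw : ∀ p q, p ≠ q → w {p, q} = ⟪v p, v q⟫) {s : Finset ι} (hs : s.card = 2 * k) :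
    (∏ j ∈ Finset.range k, (m + 1 + 2 * j : ℝ)) *
        ∫ x in sphere (0 : E) 1, ∏ j ∈ s, ⟪v j, x⟫ ∂μH[m] =
      μH[m].real (sphere (0 : E) 1) * hafnian w s := by
  have : FiniteDimensional ℝ E := .of_finrank_eq_succ hE
  have : IsFiniteMeasure (μH[m].restrict (sphere (0 : E) 1)) :=
    isFiniteMeasure_restrict.2 (hausdorffMeasure_sphere_lt_top hE).ne
  have hsphere : ∀ᵐ x ∂(μH[m].restrict (sphere (0 : E) 1)), ‖x‖ = 1 :=
    (ae_restrict_mem isClosed_sphere.measurableSet).mono fun _ ↦ mem_sphere_zero_iff_norm.1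
  have hwick := prod_mul_integral_prod_inner_eq_hafnian hsphere
    (measurePreserving_hausdorffMeasure_restrict_sphere m 1) hw hs
  rwa [hE, Nat.cast_add_one, measureReal_restrict_apply_univ] at hwick

end Sphere

end Isserlis

/-- Even moments of the unit sphere: for any indices `i : Fin (2k) → Fin (m+1)`,
`∫_{S^m} x_{i 1} ⋯ x_{i (2k)} dσ = (Vol(S^m)(m−1)!!/(m+2k−1)!!) Σ_M Π_{{p,q}∈M} δ_{i(p) i(q)}`,
the sum being over all partitions `M` of `{1,…,2k}` into `k` unordered pairs.  Here a partition
into pairs is encoded as a finset `M` of two-element finsets, pairwise disjoint and covering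
everything, and the Kronecker factor for a pair `p ∈ M` is `1` if `i` is constant on `p` and `0`
otherwise. -/
theorem stmt_7 (m k : ℕ) (hm : 1 ≤ m) (hk : 1 ≤ k) (i : Fin (2 * k) → Fin (m + 1)) :
    ∫ x in Metric.sphere (0 : EuclideanSpace ℝ (Fin (m + 1))) 1,
        (∏ j : Fin (2 * k), x (i j)) ∂(μH[(m : ℝ)]) =
      ((μH[(m : ℝ)] (Metric.sphere (0 : EuclideanSpace ℝ (Fin (m + 1))) 1)).toReal *
          (Nat.doubleFactorial (m - 1) : ℝ) / (Nat.doubleFactorial (m + 2 * k - 1) : ℝ)) *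
        ∑ M ∈ Finset.univ.filter (fun M : Finset (Finset (Fin (2 * k))) =>
            (∀ p ∈ M, p.card = 2) ∧ (∀ p ∈ M, ∀ q ∈ M, p ≠ q → Disjoint p q) ∧
              M.sup id = Finset.univ),
          ∏ p ∈ M, (if ∀ a ∈ p, ∀ b ∈ p, i a = i b then (1 : ℝ) else 0) := by
  let v : Fin (2 * k) → EuclideanSpace ℝ (Fin (m + 1)) := fun j ↦ EuclideanSpace.single (i j) 1
  let w : Finset (Fin (2 * k)) → ℝ := fun p ↦ if ∀ a ∈ p, ∀ b ∈ p, i a = i b then 1 else 0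
  have hw : ∀ p q, p ≠ q → w {p, q} = inner ℝ (v p) (v q) := fun p q _ ↦ by
    simp only [w, v, forall_mem_pair_apply_eq_iff, EuclideanSpace.inner_single_left,
      PiLp.single_apply, map_one, one_mul]
  have hwick := prod_mul_integral_sphere_prod_inner_eq_hafnian finrank_euclideanSpace_fin hw
    (k := k) (s := Finset.univ) (Finset.card_fin _)
  have hcoord : ∀ j (x : EuclideanSpace ℝ (Fin (m + 1))), inner ℝ (v j) x = x (i j) := fun j x ↦ by
    simp [v, EuclideanSpace.inner_single_left]
  simp only [hcoord, hafnian, pairings_univ] at hwick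
  have hfactor : (∏ j ∈ Finset.range k, (m + 1 + 2 * j : ℝ)) ≠ 0 :=
    Finset.prod_ne_zero_iff.2 fun j _ ↦ by positivity
  have hpos : ((m - 1).doubleFactorial : ℝ) ≠ 0 := by positivity
  rw [← Measure.real, doubleFactorial_add_two_mul_sub_one]
  push_cast
  rw [mul_comm (Measure.real _ _), mul_div_mul_left _ _ hpos,
    div_mul_eq_mul_div, eq_div_iff hfactor, mul_comm]
  exact hwick
end

section
/- Let m ≥ 1 and k ≥ 1. Let δ^{⊙k} denote the k-fold unnormalized symmetric power of the Kronecker delta tensor on ℝ^{m+1}, defined inductively by δ^{⊙1} := δ and δ^{⊙(j+1)} := δ⊙δ^{⊙j}. Then δ⌟δ^{⊙k} = k(m+2k−1)·δ^{⊙(k−1)}, where for k = 1 the right-hand side is interpreted as the scalar (m+1) (with δ^{⊙0} the empty tensor equal to 1). -/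
/-- The unnormalized symmetric (shuffle) product of tensors on `Fin n`:
`(T₁ ⊙ T₂)(i) = Σ_S T₁(i∘enum S) ⋅ T₂(i∘enum Sᶜ)`, summing over `k`-element subsets `S` of
`Fin (k+l)`, with indices enumerated in increasing order. -/
noncomputable def symProd {n k l : ℕ} (T₁ : (Fin k → Fin n) → ℝ) (T₂ : (Fin l → Fin n) → ℝ) :
    (Fin (k + l) → Fin n) → ℝ :=
  fun i => ∑ S : {S : Finset (Fin (k + l)) // S.card = k},
    T₁ (fun a => i ((S.1.orderIsoOfFin S.2 a : Fin (k + l)))) *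
      T₂ (fun b => i ((S.1ᶜ.orderIsoOfFin
        (by rw [Finset.card_compl, S.2, Fintype.card_fin]; omega) b : Fin (k + l))))

/-- The Kronecker delta, as a symmetric tensor of order 2 on `Fin n`. -/
def kdelta (n : ℕ) : (Fin 2 → Fin n) → ℝ := fun i => if i 0 = i 1 then 1 else 0

/-- Contraction of a tensor of order `k` with the Kronecker delta in its last two indices,
`(δ⌟T)(i_1,…,i_{k−2}) = Σ_p T(i_1,…,i_{k−2},p,p)`; by convention `δ⌟T = 0` when `k < 2`. -/
noncomputable def contract {n k : ℕ} (T : (Fin k → Fin n) → ℝ) : (Fin (k - 2) → Fin n) → ℝ :=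
  if 2 ≤ k then
    fun i => ∑ p : Fin n, T (fun j => if hj : (j : ℕ) < k - 2 then i ⟨j, hj⟩ else p)
  else 0

/-- Reindexing a tensor along an equality of orders. -/
def castTensor {n a b : ℕ} (h : a = b) (T : (Fin a → Fin n) → ℝ) : (Fin b → Fin n) → ℝ :=
  fun i => T (fun j => i (Fin.cast h j))

/-- The `k`-fold unnormalized symmetric power `δ^{⊙k}` of the Kronecker delta (with
`δ^{⊙0} = 1`, the empty tensor, and `δ^{⊙(j+1)} = δ ⊙ δ^{⊙j}`). -/
noncomputable def deltaPow (n : ℕ) : (k : ℕ) → (Fin (2 * k) → Fin n) → ℝ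
  | 0 => fun _ => 1
  | (j + 1) => castTensor (by omega : 2 + 2 * j = 2 * (j + 1))
      (symProd (kdelta n) (deltaPow n j))

/-!
The symmetric product of `δ` with the sum over all perfect matchings of `l` index positions (each
matching contributing the product of its deltas) produces every perfect matching of `l + 2`
positions once per edge, so `δ^{⊙k}` is `k!` times the sum over perfect matchings. Its component at
`i` therefore depends only on how often each value occurs in `i`: it equals `k! ∏ᵥ (cᵥ - 1)‼` if all
multiplicities `cᵥ` are even and `0` otherwise. Contracting adds two occurrences of some value `p`,
which multiplies the product by `cₚ + 1`, and `∑ₚ (cₚ + 1) = 2(k - 1) + (m + 1)`.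
-/

section ValueCount

open Finset

variable {ι κ α : Type*} [DecidableEq α]

/-- The multiplicity of the value `v` in the tuple `i`. -/
def valueCount [Fintype ι] (i : ι → α) (v : α) : ℕ :=
  Fintype.card {a // i a = v}

lemma valueCount_restrict (i : ι → α) (S : Finset ι) (v : α) :
    valueCount (fun a : S => i a) v = #{a ∈ S | i a = v} := by
  rw [valueCount, Fintype.card_subtype, ← card_map (Function.Embedding.subtype _)]
  congr 1
  ext a
  simp [and_comm]

variable [Fintype ι]

lemma sum_valueCount [Fintype α] (i : ι → α) : ∑ v, valueCount i v = Fintype.card ι := by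
  rw [← Fintype.card_congr (Equiv.sigmaFiberEquiv i), Fintype.card_sigma]
  rfl

lemma valueCount_comp_equiv [Fintype κ] (e : κ ≃ ι) (i : ι → α) (v : α) :
    valueCount (fun b => i (e b)) v = valueCount i v :=
  Fintype.card_congr (e.subtypeEquiv fun _ => Iff.rfl)

lemma valueCount_eq_card_filter (i : ι → α) (v : α) :
    valueCount i v = #{a | i a = v} :=
  Fintype.card_subtype _

lemma valueCount_snoc {l : ℕ} (i : Fin l → α) (p v : α) :
    valueCount (Fin.snoc i p : Fin (l + 1) → α) v = valueCount i v + if p = v then 1 else 0 := by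
  simp only [valueCount_eq_card_filter, card_filter, Fin.sum_univ_castSucc,
    Fin.snoc_castSucc, Fin.snoc_last]

lemma valueCount_compl_self [DecidableEq ι] {i : ι → α} {v : α} {S : Finset ι}
    (hS : ∀ a ∈ S, i a = v) :
    valueCount (fun a : (Sᶜ : Finset ι) => i a) v = valueCount i v - #S := by
  have subset_fiber : S ⊆ univ.filter (i · = v) := fun a ha => by simpa using hS a ha
  rw [valueCount_restrict, valueCount_eq_card_filter, ← card_sdiff_of_subset subset_fiber]
  congr 1
  ext a
  simp [and_comm]

lemma valueCount_compl_of_ne [DecidableEq ι] {i : ι → α} {v w : α} {S : Finset ι}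
    (hS : ∀ a ∈ S, i a = v) (hwv : w ≠ v) :
    valueCount (fun a : (Sᶜ : Finset ι) => i a) w = valueCount i w := by
  rw [valueCount_restrict, valueCount_eq_card_filter]
  congr 1
  ext a
  suffices i a = w → a ∉ S by simpa
  rintro rfl haS
  exact hwv (hS a haS)

end ValueCount

/-- The number of perfect matchings of a set with `c` elements: `(c - 1)‼` for even `c` and `0`
for odd `c`. The recursion picks the partner of a fixed element. -/
def matchingCount : ℕ → ℕ
  | 0 => 1
  | 1 => 0
  | c + 2 => (c + 1) * matchingCount c

-- Both sides count perfect matchings with a distinguished point; the left one by its edge.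
lemma two_mul_choose_two_mul_matchingCount (c : ℕ) :
    2 * (c.choose 2 * matchingCount (c - 2)) = c * matchingCount c := by
  match c with
  | 0 => rfl
  | 1 => rfl
  | c + 2 =>
    have two_mul_choose : 2 * (c + 2).choose 2 = (c + 2) * (c + 1) := by
      rw [mul_comm, Nat.choose_two_right, Nat.div_mul_cancel (Nat.even_mul_pred_self _).two_dvd]
      rfl
    rw [← mul_assoc, two_mul_choose, mul_assoc, matchingCount, Nat.add_sub_cancel]

section Tensor

open Finset

variable {n l : ℕ}

lemma castTensor_smul {a b : ℕ} (h : a = b) (c : ℝ) (T : (Fin a → Fin n) → ℝ) :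
    castTensor h (c • T) = c • castTensor h T :=
  rfl

lemma symProd_smul {k : ℕ} (c : ℝ) (T : (Fin k → Fin n) → ℝ) (U : (Fin l → Fin n) → ℝ) :
    symProd T (c • U) = c • symProd T U := by
  funext i
  simp only [symProd, Pi.smul_apply, smul_eq_mul, mul_sum]
  exact sum_congr rfl fun _ _ => mul_left_comm _ _ _

lemma contract_apply (T : (Fin (l + 2) → Fin n) → ℝ) (i : Fin l → Fin n) :
    contract T i = ∑ p, T (Fin.snoc (Fin.snoc i p : Fin (l + 1) → Fin n) p) := by
  rw [contract, if_pos (Nat.le_add_left 2 l)]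
  refine sum_congr rfl fun p _ => congrArg T (funext fun j => ?_)
  refine Fin.lastCases (by simp) (fun j => ?_) j
  refine Fin.lastCases (by simp) (fun j => ?_) j
  simp

lemma contract_smul (c : ℝ) (T : (Fin (l + 2) → Fin n) → ℝ) :
    contract (c • T) = c • contract T := by
  funext (i : Fin l → Fin n)
  change contract (c • T) i = c * contract T i
  rw [contract_apply, contract_apply, mul_sum]
  rfl

/-- The sum over all perfect matchings of `l` index positions of the product of the Kronecker
deltas of the matched pairs. Only matchings within the fibers of the index tuple `i` contribute,
so they are counted fiber by fiber. -/
def matchingTensor (n l : ℕ) : (Fin l → Fin n) → ℝ :=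
  fun i => ∏ v, (matchingCount (valueCount i v) : ℝ)

lemma castTensor_matchingTensor {a b : ℕ} (h : a = b) :
    castTensor h (matchingTensor n a) = matchingTensor n b := by
  subst h
  rfl

lemma contract_matchingTensor (n l : ℕ) :
    contract (matchingTensor n (l + 2)) = ((n : ℝ) + l) • matchingTensor n l := by
  funext i
  have append_pair (p : Fin n) :
      matchingTensor n (l + 2) (Fin.snoc (Fin.snoc i p : Fin (l + 1) → Fin n) p) =
        ((valueCount i p : ℝ) + 1) * matchingTensor n l i := by
    simp only [matchingTensor, valueCount_snoc]
    rw [← mul_prod_erase _ _ (mem_univ p),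
      ← mul_prod_erase _ (fun v => (matchingCount (valueCount i v) : ℝ)) (mem_univ p), ← mul_assoc]
    congr 1
    · simp [matchingCount]
    · refine prod_congr rfl fun v hv => ?_
      simp [(ne_of_mem_erase hv).symm]
  calc contract (matchingTensor n (l + 2)) i
      = ∑ p, ((valueCount i p : ℝ) + 1) * matchingTensor n l i := by
        rw [contract_apply, sum_congr rfl fun p _ => append_pair p]
    _ = ((n : ℝ) + l) * matchingTensor n l i := by
        rw [← sum_mul, sum_add_distrib, ← Nat.cast_sum, sum_valueCount]
        simp [add_comm]

lemma kdelta_orderIsoOfFin {N : ℕ} (i : Fin N → Fin n) {S : Finset (Fin N)} (hS : #S = 2) :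
    kdelta n (fun a => i (S.orderIsoOfFin hS a)) =
      ∑ v, if ∀ a ∈ S, i a = v then (1 : ℝ) else 0 := by
  set x := S.orderIsoOfFin hS
  have forall_mem_iff (v : Fin n) :
      (∀ a ∈ S, i a = v) ↔ i (x 0) = v ∧ i (x 1) = v := by
    rw [← Fin.forall_fin_two (p := fun a => i (x a) = v),
      ← x.surjective.forall (p := fun a : S => i a = v)]
    simp
  have eq_iff_sum (a b : Fin n) : (if a = b then (1 : ℝ) else 0) =
      ∑ v, if a = v ∧ b = v then 1 else 0 := by
    simp [ite_and, eq_comm]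
  simpa only [kdelta, forall_mem_iff] using eq_iff_sum _ _

lemma matchingTensor_compl_orderIsoOfFin {N : ℕ} {i : Fin N → Fin n} {v : Fin n}
    {S : Finset (Fin N)} (hS : ∀ a ∈ S, i a = v) (hl : #Sᶜ = l) :
    matchingTensor n l (fun b => i (Sᶜ.orderIsoOfFin hl b)) =
      matchingCount (valueCount i v - #S) *
        ∏ w ∈ univ.erase v, (matchingCount (valueCount i w) : ℝ) := by
  have valueCount_enum (w : Fin n) : valueCount (fun b => i (Sᶜ.orderIsoOfFin hl b)) w =
      valueCount (fun a : (Sᶜ : Finset (Fin N)) => i a) w :=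
    valueCount_comp_equiv (Sᶜ.orderIsoOfFin hl).toEquiv (fun a : (Sᶜ : Finset (Fin N)) => i a) w
  simp only [matchingTensor, valueCount_enum]
  rw [← mul_prod_erase _ _ (mem_univ v), valueCount_compl_self hS]
  congr 1
  refine prod_congr rfl fun w hw => ?_
  rw [valueCount_compl_of_ne hS (ne_of_mem_erase hw)]

lemma sum_ite_forall_mem_of_card_eq {ι : Type*} [Fintype ι] (p : ι → Prop) [DecidablePred p]
    (k : ℕ) (x : ℝ) : (∑ S : {S : Finset ι // #S = k}, if ∀ a ∈ S.1, p a then x else 0) =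
      (#{a | p a}).choose k * x := by
  rw [← sum_subtype (powersetCard k univ) (by simp) (fun S => if ∀ a ∈ S, p a then x else 0),
    ← sum_filter, sum_const, nsmul_eq_mul, ← card_powersetCard]
  congr 3
  ext S
  simp [mem_powersetCard, subset_iff, and_comm]

lemma choose_two_mul_matchingTensor_erase {N : ℕ} (i : Fin N → Fin n) (v : Fin n) :
    ((valueCount i v).choose 2 : ℝ) * (matchingCount (valueCount i v - 2) *
        ∏ w ∈ univ.erase v, (matchingCount (valueCount i w) : ℝ)) =
      (valueCount i v / 2 : ℝ) * matchingTensor n N i := by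
  rw [matchingTensor, ← mul_prod_erase _ _ (mem_univ v)]
  have edge_count : (2 : ℝ) * ((valueCount i v).choose 2 * matchingCount (valueCount i v - 2)) =
      valueCount i v * matchingCount (valueCount i v) :=
    mod_cast two_mul_choose_two_mul_matchingCount (valueCount i v)
  linear_combination
    (∏ w ∈ univ.erase v, (matchingCount (valueCount i w) : ℝ)) / 2 * edge_count

lemma symProd_kdelta_matchingTensor (n l : ℕ) :
    symProd (kdelta n) (matchingTensor n l) =
      (((2 + l : ℕ) : ℝ) / 2) • matchingTensor n (2 + l) := by
  funext i
  let remainder (v : Fin n) : ℝ := matchingCount (valueCount i v - 2) *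
    ∏ w ∈ univ.erase v, (matchingCount (valueCount i w) : ℝ)
  calc symProd (kdelta n) (matchingTensor n l) i
      = ∑ S : {S : Finset (Fin (2 + l)) // #S = 2}, ∑ v,
          if ∀ a ∈ S.1, i a = v then remainder v else 0 := by
        refine sum_congr rfl fun S _ => ?_
        rw [kdelta_orderIsoOfFin, sum_mul]
        refine sum_congr rfl fun v _ => ?_
        split_ifs with hS
        · rw [one_mul, matchingTensor_compl_orderIsoOfFin hS, S.2]
        · exact zero_mul _
    _ = ∑ v, ((valueCount i v).choose 2 : ℝ) * remainder v := by
        rw [sum_comm]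
        refine sum_congr rfl fun v _ => ?_
        rw [valueCount_eq_card_filter]
        convert sum_ite_forall_mem_of_card_eq (i · = v) 2 (remainder v)
    _ = ∑ v, (valueCount i v / 2 : ℝ) * matchingTensor n (2 + l) i :=
        sum_congr rfl fun v _ => choose_two_mul_matchingTensor_erase i v
    _ = (((2 + l : ℕ) : ℝ) / 2) * matchingTensor n (2 + l) i := by
        rw [← sum_mul, ← sum_div, ← Nat.cast_sum, sum_valueCount, Fintype.card_fin]

lemma deltaPow_eq_smul_matchingTensor (n k : ℕ) :
    deltaPow n k = (k.factorial : ℝ) • matchingTensor n (2 * k) := by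
  induction k with
  | zero =>
    funext i
    simp [deltaPow, matchingTensor, valueCount, matchingCount]
  | succ k ih =>
    rw [deltaPow, ih, symProd_smul, symProd_kdelta_matchingTensor, castTensor_smul,
      castTensor_smul, castTensor_matchingTensor, smul_smul, Nat.factorial_succ]
    congr 1
    push_cast
    ring

end Tensor

/-- For `k ≥ 1`, `δ⌟δ^{⊙k} = k(m+2k−1)·δ^{⊙(k−1)}` on `ℝ^{m+1}`; for `k = 1` the right-hand
side is the scalar `m+1` (with `δ^{⊙0} = 1`). -/
theorem stmt_11 (m k : ℕ) (hm : 1 ≤ m) (hk : 1 ≤ k) :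
    contract (deltaPow (m + 1) k) =
      fun i => ((k : ℝ) * ((m : ℝ) + 2 * k - 1)) *
        castTensor (by omega : 2 * (k - 1) = 2 * k - 2) (deltaPow (m + 1) (k - 1)) i := by
  obtain ⟨j, rfl⟩ := Nat.exists_eq_add_of_le' hk
  funext i
  calc contract (deltaPow (m + 1) (j + 1)) i
      = (j + 1).factorial * (((m + 1 : ℕ) + (2 * j : ℕ)) * matchingTensor (m + 1) (2 * j) i) := by
        rw [deltaPow_eq_smul_matchingTensor, contract_smul (l := 2 * j)]
        exact congrArg (_ * ·) (congrFun (contract_matchingTensor (m + 1) (2 * j)) i)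
    _ = ((j + 1 : ℕ) * (m + 2 * (j + 1 : ℕ) - 1)) *
          (j.factorial * matchingTensor (m + 1) (2 * j) i) := by
        push_cast [Nat.factorial_succ]
        ring
    _ = ((j + 1 : ℕ) * (m + 2 * (j + 1 : ℕ) - 1)) * deltaPow (m + 1) j i := by
        rw [deltaPow_eq_smul_matchingTensor, Pi.smul_apply, smul_eq_mul]
end
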